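/- Two braid words are strongly equivalent (equivalent via all relations of F_n except the classical second Reidemeister move ζ_i² = 1) if and only if their associated decorated graphs Γ(b), Γ(b') are isomorphic preserving all structure: the ordering of the n upper and n lower endpoint vertices, the downward orientation of edges, and, at each 4-valent vertex, the pairing of each incoming edge with its opposite outgoing edge. -/

import Mathlib

set_option maxHeartbeats 1000000

namespace OneTermBracket

/-- Letters (generators) of free braid words on `n` strands:
`zeta i` is a classical crossing, `tau i` a virtual crossing, `1 ≤ i+1 ≤ n-1`. -/
inductive Letter (n : ℕ) where
  | zeta (i : Fin (n-1))
  | tau  (i : Fin (n-1))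
deriving DecidableEq

namespace Letter

def idx {n : ℕ} : Letter n → Fin (n-1)
  | zeta i => i
  | tau i => i

def isZeta {n : ℕ} : Letter n → Bool
  | zeta _ => true
  | tau _ => false

end Letter

def lo {n : ℕ} (i : Fin (n-1)) : Fin n := ⟨i.1, by have := i.2; omega⟩
def hi {n : ℕ} (i : Fin (n-1)) : Fin n := ⟨i.1 + 1, by have := i.2; omega⟩

/-- The transposition `(i, i+1)` of `{1, …, n}`. -/
def sPerm {n : ℕ} (i : Fin (n-1)) : Equiv.Perm (Fin n) := Equiv.swap (lo i) (hi i)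

/-- Each letter acts on positions as the transposition `(i, i+1)`. -/
def transOf {n : ℕ} (g : Letter n) : Equiv.Perm (Fin n) := sPerm g.idx

/-- The permutation realized by the prefix of length `j` of a braid word,
mapping the top label of a strand to its position at level `j`. -/
def prefPerm {n : ℕ} (w : List (Letter n)) (j : ℕ) : Equiv.Perm (Fin n) :=
  (((w.take j).map transOf).reverse).prod

/-- The permutation `P(β)` of a braid word (top endpoint `k` goes to bottom endpoint `P k`). -/
def permOf {n : ℕ} (w : List (Letter n)) : Equiv.Perm (Fin n) :=
  ((w.map transOf).reverse).prod

/-- The unordered pair of (top labels of the) strands crossing at position `j` of `w`. -/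
def strandsAt {n : ℕ} (w : List (Letter n)) (j : ℕ) : Option (Sym2 (Fin n)) :=
  (w[j]?).map fun g => s((prefPerm w j)⁻¹ (lo g.idx), (prefPerm w j)⁻¹ (hi g.idx))

/-- Component-wise parity determined by a partition `{1,…,n} = N₁ ⊔ N₂` (encoded by
`c : Fin n → Bool`): a classical crossing is odd (`1`) iff its two strands lie in
different parts. Non-classical positions get `0`. -/
def cwParity {n : ℕ} (c : Fin n → Bool) (w : List (Letter n)) (j : ℕ) : ZMod 2 :=
  match w[j]? with
  | some (.zeta i) =>
      if c ((prefPerm w j)⁻¹ (lo i)) = c ((prefPerm w j)⁻¹ (hi i)) then 0 else 1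
  | _ => 0

/-- The defining relations of `F_n` and `FB_n` which do not involve
`ζ_i² = 1` or the classical third Reidemeister move ("strong" moves). -/
inductive RelStrong (n : ℕ) : List (Letter n) → List (Letter n) → Prop
  | tt (i : Fin (n-1)) : RelStrong n [.tau i, .tau i] []
  | virt (i : Fin (n-1)) : RelStrong n [.zeta i, .tau i] [.tau i, .zeta i]
  | far_zz (i j : Fin (n-1)) (h : 2 ≤ Nat.dist i j) :
      RelStrong n [.zeta i, .zeta j] [.zeta j, .zeta i]
  | far_zt (i j : Fin (n-1)) (h : 2 ≤ Nat.dist i j) :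
      RelStrong n [.zeta i, .tau j] [.tau j, .zeta i]
  | far_tt (i j : Fin (n-1)) (h : 2 ≤ Nat.dist i j) :
      RelStrong n [.tau i, .tau j] [.tau j, .tau i]
  | r3v (i j : Fin (n-1)) (h : (j:ℕ) = (i:ℕ) + 1) :
      RelStrong n [.tau i, .tau j, .tau i] [.tau j, .tau i, .tau j]
  | semi (i j : Fin (n-1)) (h : (j:ℕ) = (i:ℕ) + 1) :
      RelStrong n [.tau i, .tau j, .zeta i] [.zeta j, .tau i, .tau j]

/-- The defining relations of `F_n`. -/
inductive RelF (n : ℕ) : List (Letter n) → List (Letter n) → Prop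
  | strong {r1 r2} : RelStrong n r1 r2 → RelF n r1 r2
  | zz (i : Fin (n-1)) : RelF n [.zeta i, .zeta i] []

/-- The defining relations of the free braid group `FB_n`. -/
inductive RelFB (n : ℕ) : List (Letter n) → List (Letter n) → Prop
  | ofF {r1 r2} : RelF n r1 r2 → RelFB n r1 r2
  | r3c (i j : Fin (n-1)) (h : (j:ℕ) = (i:ℕ) + 1) :
      RelFB n [.zeta i, .zeta j, .zeta i] [.zeta j, .zeta i, .zeta j]

/-- One application of a relation from `R` inside a word. -/
def StepOf {n : ℕ} (R : List (Letter n) → List (Letter n) → Prop)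
    (w1 w2 : List (Letter n)) : Prop :=
  ∃ A B r1 r2, R r1 r2 ∧ w1 = A ++ r1 ++ B ∧ w2 = A ++ r2 ++ B

/-- Strong equivalence: all moves of `F_n` except `ζ_i² = 1`. -/
def StrongEq {n : ℕ} (w1 w2 : List (Letter n)) : Prop :=
  Relation.EqvGen (StepOf (RelStrong n)) w1 w2

/-- Equivalence of braid words as elements of `F_n`. -/
def EqF {n : ℕ} (w1 w2 : List (Letter n)) : Prop :=
  Relation.EqvGen (StepOf (RelF n)) w1 w2

/-- Equivalence of braid words as elements of the free braid group `FB_n`. -/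
def EqFB {n : ℕ} (w1 w2 : List (Letter n)) : Prop :=
  Relation.EqvGen (StepOf (RelFB n)) w1 w2

/-- The parity axioms, for a parity `P` defined on the class `C` of braid words.
`P w j` is the parity of the crossing at position `j` of `w` (only classical
positions matter). -/
structure IsParity {n : ℕ} (C : List (Letter n) → Prop)
    (P : List (Letter n) → ℕ → ZMod 2) : Prop where
  /-- Crossings not taking part in a relation keep their parity (part before). -/
  untouched_left : ∀ A B r1 r2, RelFB n r1 r2 →
    C (A ++ r1 ++ B) → C (A ++ r2 ++ B) → ∀ j < A.length,
    P (A ++ r1 ++ B) j = P (A ++ r2 ++ B) j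
  /-- Crossings not taking part in a relation keep their parity (part after). -/
  untouched_right : ∀ A B r1 r2, RelFB n r1 r2 →
    C (A ++ r1 ++ B) → C (A ++ r2 ++ B) → ∀ j < B.length,
    P (A ++ r1 ++ B) (A.length + r1.length + j) = P (A ++ r2 ++ B) (A.length + r2.length + j)
  /-- In commutation-type relations (far commutativity, virtualization), the two
  letters keep their parities. -/
  comm : ∀ A B x y, RelFB n [x, y] [y, x] →
    C (A ++ [x, y] ++ B) → C (A ++ [y, x] ++ B) →
    P (A ++ [x, y] ++ B) A.length = P (A ++ [y, x] ++ B) (A.length + 1) ∧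
    P (A ++ [x, y] ++ B) (A.length + 1) = P (A ++ [y, x] ++ B) A.length
  /-- In a classical second Reidemeister move both crossings have the same parity. -/
  r2c : ∀ A B (i : Fin (n-1)),
    C (A ++ [.zeta i, .zeta i] ++ B) → C (A ++ B) →
    P (A ++ [.zeta i, .zeta i] ++ B) A.length
      = P (A ++ [.zeta i, .zeta i] ++ B) (A.length + 1)
  /-- In a semivirtual move, the classical crossing keeps its parity. -/
  semiv : ∀ A B (i j : Fin (n-1)), (j:ℕ) = (i:ℕ) + 1 →
    C (A ++ [.tau i, .tau j, .zeta i] ++ B) →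
    C (A ++ [.zeta j, .tau i, .tau j] ++ B) →
    P (A ++ [.tau i, .tau j, .zeta i] ++ B) (A.length + 2)
      = P (A ++ [.zeta j, .tau i, .tau j] ++ B) A.length
  /-- In a classical third Reidemeister move the number of odd crossings is even. -/
  r3_even : ∀ A B (i j : Fin (n-1)), (j:ℕ) = (i:ℕ) + 1 →
    C (A ++ [.zeta i, .zeta j, .zeta i] ++ B) →
    C (A ++ [.zeta j, .zeta i, .zeta j] ++ B) →
    P (A ++ [.zeta i, .zeta j, .zeta i] ++ B) A.length
      + P (A ++ [.zeta i, .zeta j, .zeta i] ++ B) (A.length + 1)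
      + P (A ++ [.zeta i, .zeta j, .zeta i] ++ B) (A.length + 2) = 0
  /-- In a classical third Reidemeister move, upper/middle/lower crossings on the
  left correspond to lower/middle/upper crossings on the right with equal parities. -/
  r3_corr : ∀ A B (i j : Fin (n-1)), (j:ℕ) = (i:ℕ) + 1 →
    C (A ++ [.zeta i, .zeta j, .zeta i] ++ B) →
    C (A ++ [.zeta j, .zeta i, .zeta j] ++ B) →
    P (A ++ [.zeta i, .zeta j, .zeta i] ++ B) A.length
      = P (A ++ [.zeta j, .zeta i, .zeta j] ++ B) (A.length + 2) ∧
    P (A ++ [.zeta i, .zeta j, .zeta i] ++ B) (A.length + 1)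
      = P (A ++ [.zeta j, .zeta i, .zeta j] ++ B) (A.length + 1) ∧
    P (A ++ [.zeta i, .zeta j, .zeta i] ++ B) (A.length + 2)
      = P (A ++ [.zeta j, .zeta i, .zeta j] ++ B) A.length

/-- Delete from `w` all classical letters whose parity (given by `par`) is even. -/
def deleteEven {n : ℕ} (w : List (Letter n)) (par : ℕ → ZMod 2) : List (Letter n) :=
  (List.range w.length).filterMap fun j =>
    (w[j]?).bind fun g =>
      match g with
      | .zeta i => if par j = 0 then none else some (.zeta i)
      | .tau i => some (.tau i)

/-- The one-term parity bracket: delete all even classical crossings. -/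
def bracket {n : ℕ} (P : List (Letter n) → ℕ → ZMod 2) (w : List (Letter n)) :
    List (Letter n) :=
  deleteEven w (P w)

/-- Positions of classical crossings of a word. -/
def ZetaPos {n : ℕ} (w : List (Letter n)) : Set ℕ :=
  {j | ∃ i, w[j]? = some (Letter.zeta i)}

/-- The classical crossings at positions `j1 < j2` form a bigon: they lie on the same
pair of strands, and no classical crossing between them lies on either of those strands. -/
def IsBigon {n : ℕ} (w : List (Letter n)) (j1 j2 : ℕ) : Prop :=
  j1 < j2 ∧ j1 ∈ ZetaPos w ∧ j2 ∈ ZetaPos w ∧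
  strandsAt w j1 = strandsAt w j2 ∧
  ∀ k, j1 < k → k < j2 → k ∈ ZetaPos w →
    ∀ e e', strandsAt w j1 = some e → strandsAt w k = some e' → ∀ a ∈ e, a ∉ e'

/-- Delete the letters at two given positions. -/
def delete2 {n : ℕ} (w : List (Letter n)) (j1 j2 : ℕ) : List (Letter n) :=
  (w.eraseIdx (max j1 j2)).eraseIdx (min j1 j2)

/-- One bigon reduction. -/
def BigonStep {n : ℕ} (w w' : List (Letter n)) : Prop :=
  ∃ j1 j2, IsBigon w j1 j2 ∧ w' = delete2 w j1 j2

/-- A word is irreducible if it admits no bigon reduction. -/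
def Irreducible {n : ℕ} (w : List (Letter n)) : Prop := ¬ ∃ j1 j2, IsBigon w j1 j2

/-- Number of classical letters of a word. -/
def countZeta {n : ℕ} (w : List (Letter n)) : ℕ := (w.filter Letter.isZeta).length

/-- `φ` is an isomorphism of the decorated graphs `Γ(w1) ≅ Γ(w2)`, encoded
combinatorially: a bijection of classical crossings preserving the pair of strands
through each crossing, the order of crossings along each strand, and the endpoint
structure (the permutation). -/
structure IsGammaIso {n : ℕ} (w1 w2 : List (Letter n)) (φ : ℕ → ℕ) : Prop where
  maps : ∀ j ∈ ZetaPos w1, φ j ∈ ZetaPos w2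
  inj : ∀ j ∈ ZetaPos w1, ∀ j' ∈ ZetaPos w1, φ j = φ j' → j = j'
  surj : ∀ k ∈ ZetaPos w2, ∃ j ∈ ZetaPos w1, φ j = k
  strands : ∀ j ∈ ZetaPos w1, strandsAt w2 (φ j) = strandsAt w1 j
  order : ∀ j ∈ ZetaPos w1, ∀ j' ∈ ZetaPos w1, j < j' →
    (∃ e e' a, strandsAt w1 j = some e ∧ strandsAt w1 j' = some e' ∧ a ∈ e ∧ a ∈ e') →
    φ j < φ j'
  perm : permOf w1 = permOf w2

/-! ### The groups `F_n` and `FB_n` as presented groups -/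

/-- Generators: `Sum.inl i` is the classical generator `ζ_i`,
`Sum.inr i` is the virtual generator `τ_i`. -/
abbrev GGen (n : ℕ) := Fin (n-1) ⊕ Fin (n-1)

def zg {n : ℕ} (i : Fin (n-1)) : FreeGroup (GGen n) := FreeGroup.of (Sum.inl i)
def tg {n : ℕ} (i : Fin (n-1)) : FreeGroup (GGen n) := FreeGroup.of (Sum.inr i)

/-- The relators of `F_n`. -/
def FRels (n : ℕ) : Set (FreeGroup (GGen n)) :=
  (⋃ i, {zg i * zg i}) ∪ (⋃ i, {tg i * tg i}) ∪
  (⋃ i, {zg i * tg i * (tg i * zg i)⁻¹}) ∪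
  (⋃ (i : Fin (n-1)) (j : Fin (n-1)) (_ : 2 ≤ Nat.dist i j),
    {zg i * zg j * (zg j * zg i)⁻¹, zg i * tg j * (tg j * zg i)⁻¹,
     tg i * tg j * (tg j * tg i)⁻¹}) ∪
  (⋃ (i : Fin (n-1)) (j : Fin (n-1)) (_ : (j:ℕ) = (i:ℕ) + 1),
    {tg i * tg j * tg i * (tg j * tg i * tg j)⁻¹,
     tg i * tg j * zg i * (zg j * tg i * tg j)⁻¹})

/-- The relators of `FB_n`: those of `F_n` together with the classical third
Reidemeister relation. -/
def FBRels (n : ℕ) : Set (FreeGroup (GGen n)) :=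
  FRels n ∪
  (⋃ (i : Fin (n-1)) (j : Fin (n-1)) (_ : (j:ℕ) = (i:ℕ) + 1),
    {zg i * zg j * zg i * (zg j * zg i * zg j)⁻¹})

/-- The group `F_n`. -/
abbrev FGrp (n : ℕ) := PresentedGroup (FRels n)

/-- The free braid group `FB_n`. -/
abbrev FBGrp (n : ℕ) := PresentedGroup (FBRels n)

def zF {n : ℕ} (i : Fin (n-1)) : FGrp n := PresentedGroup.of (Sum.inl i)
def tF {n : ℕ} (i : Fin (n-1)) : FGrp n := PresentedGroup.of (Sum.inr i)

/-- Evaluation of a braid word in `F_n`. -/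
def evalF {n : ℕ} (w : List (Letter n)) : FGrp n :=
  (w.map fun g => match g with
    | Letter.zeta i => zF i
    | Letter.tau i => tF i).prod

/-- For each unordered pair of strands, the mod-2 number of classical letters of `w`
at which these two strands cross (strand labels traced from the top). -/
def crossPar {n : ℕ} : List (Letter n) → Sym2 (Fin n) → ZMod 2
  | [], _ => 0
  | g :: rest, e =>
    (match g with
     | Letter.zeta i => if e = s(lo i, hi i) then (1 : ZMod 2) else 0
     | Letter.tau _ => 0) + crossPar rest (e.map (transOf g))

/-! ### Chord diagrams and the Gaussian parity -/

/-- The setoid on strands given by `SameCycle`; its classes are the orbits of `σ`,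
i.e. the components of the closure. -/
def sameCycleSetoid {n : ℕ} (σ : Equiv.Perm (Fin n)) : Setoid (Fin n) :=
  ⟨σ.SameCycle, ⟨Equiv.Perm.SameCycle.refl σ, Equiv.Perm.SameCycle.symm,
    Equiv.Perm.SameCycle.trans⟩⟩

/-- The rank of a strand in the single cycle of `σ` starting from strand `0`. -/
noncomputable def rankIn {n : ℕ} [NeZero n] (σ : Equiv.Perm (Fin n)) (a : Fin n) : ℕ :=
  ((Function.invFun (fun k : Fin n => (σ ^ (k : ℕ)) 0) a : Fin n) : ℕ)

/-- Coordinates on the core circle of the two endpoints of the chord of the classical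
crossing at position `j` (the circle traverses the strands in the cyclic order of `σ`). -/
noncomputable def chordEnds {n : ℕ} [NeZero n] (w : List (Letter n))
    (σ : Equiv.Perm (Fin n)) (j : ℕ) : ℕ × ℕ :=
  match w[j]? with
  | some (Letter.zeta i) =>
      (rankIn σ ((prefPerm w j)⁻¹ (lo i)) * w.length + j,
       rankIn σ ((prefPerm w j)⁻¹ (hi i)) * w.length + j)
  | _ => (0, 0)

/-- Two chords are linked iff the endpoints of one separate the endpoints of the
other on the core circle. -/
def LinkedChords {n : ℕ} [NeZero n] (w : List (Letter n)) (σ : Equiv.Perm (Fin n))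
    (j k : ℕ) : Prop :=
  Xor' (min (chordEnds w σ j).1 (chordEnds w σ j).2 < (chordEnds w σ k).1 ∧
        (chordEnds w σ k).1 < max (chordEnds w σ j).1 (chordEnds w σ j).2)
       (min (chordEnds w σ j).1 (chordEnds w σ j).2 < (chordEnds w σ k).2 ∧
        (chordEnds w σ k).2 < max (chordEnds w σ j).1 (chordEnds w σ j).2)

/-- The Gaussian parity of the classical crossing at position `j`: the mod-2 number
of chords linked with its chord. Even (`0`) iff linked with evenly many chords. -/
noncomputable def gaussParity {n : ℕ} [NeZero n] (w : List (Letter n))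
    (σ : Equiv.Perm (Fin n)) (j : ℕ) : ZMod 2 :=
  (Nat.card {k : ℕ // k < w.length ∧ k ∈ ZetaPos w ∧ k ≠ j ∧ LinkedChords w σ j k} : ZMod 2)

/-!
Modulo the strong moves the letters `τ_i` generate a copy of the symmetric group, and the conjugates
of the elements `ζ_i τ_i` by virtual words depend only on the pair of strands that they make cross:
a permutation carrying a pair to itself either exchanges its two strands, which is the relation
`ζ_i τ_i = τ_i ζ_i`, or fixes both, and for the pair `{n - 1, n}` it is then a product of letters
`τ_j` far from `τ_{n-1}`. The elements attached to disjoint pairs commute. Hence a braid word equals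
the product of the elements attached to its classical crossings, read from top to bottom, times the
virtual word of its permutation: braid words modulo the strong moves form the semidirect product of
a trace monoid on the pairs of strands with the symmetric group. An element of a trace monoid is
determined by the order of its dependent letters, here the order of the crossings along each strand,
and this order together with the permutation is exactly what an isomorphism of `Γ(b)` preserves.
-/

section CoxeterPresentation

variable {N : ℕ} {M M' : Type*} [Monoid M] [Monoid M'] {t : Fin N → M}

/-- The Coxeter relations of the symmetric group on `N + 1` letters, satisfied by a family `t`
in a monoid. -/
structure IsCoxeterFamily (t : Fin N → M) : Prop where
  mul_self (i : Fin N) : t i * t i = 1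
  comm {i j : Fin N} (h : 2 ≤ Nat.dist i j) : Commute (t i) (t j)
  braid {i j : Fin N} (h : (j : ℕ) = i + 1) : t i * t j * t i = t j * t i * t j

theorem two_le_dist_of_succ_lt {i j : ℕ} (h : i + 1 < j) : 2 ≤ Nat.dist i j := by
  rw [Nat.dist_eq_sub_of_le (by omega)]
  omega

theorem IsCoxeterFamily.commute_of_succ_lt (ht : IsCoxeterFamily t) {i j : Fin N}
    (h : (i : ℕ) + 1 < j) : Commute (t i) (t j) :=
  ht.comm (two_le_dist_of_succ_lt h)

theorem IsCoxeterFamily.prodMk {t' : Fin N → M'} (ht : IsCoxeterFamily t)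
    (ht' : IsCoxeterFamily t') : IsCoxeterFamily fun i => (t i, t' i) where
  mul_self i := Prod.ext (ht.mul_self i) (ht'.mul_self i)
  comm h := (ht.comm h).prod (ht'.comm h)
  braid h := Prod.ext (ht.braid h) (ht'.braid h)

/-- The descending product `t (k + l - 1) * ⋯ * t (k + 1) * t k`: in a symmetric group this is the
cycle carrying `k` to `k + l`, the minimal coset representative of the parabolic filtration. -/
def descendingProd (t : Fin N → M) : (l k : ℕ) → k + l ≤ N → M
  | 0, _, _ => 1
  | l + 1, k, h => descendingProd t l (k + 1) (by omega) * t ⟨k, by omega⟩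

theorem map_descendingProd (f : M →* M') (t : Fin N → M) (l k : ℕ) (h : k + l ≤ N) :
    f (descendingProd t l k h) = descendingProd (f ∘ t) l k h := by
  induction l generalizing k with
  | zero => exact map_one f
  | succ l ih => rw [descendingProd, map_mul, ih, descendingProd, Function.comp_apply]

theorem IsCoxeterFamily.commute_descendingProd (ht : IsCoxeterFamily t) {l k : ℕ}
    (h : k + l ≤ N) {j : Fin N} (hj : (j : ℕ) + 1 < k) :
    Commute (descendingProd t l k h) (t j) := by
  induction l generalizing k with
  | zero => exact Commute.one_left _
  | succ l ih => exact (ih (by omega) (by omega)).mul_left (ht.commute_of_succ_lt hj).symm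

theorem IsCoxeterFamily.semiconjBy_descendingProd (ht : IsCoxeterFamily t) {l k : ℕ}
    (h : k + l ≤ N) {i j : Fin N} (hij : (i : ℕ) = j + 1) (hj : k ≤ j) (hi : (i : ℕ) < k + l) :
    SemiconjBy (descendingProd t l k h) (t i) (t j) := by
  induction l generalizing k with
  | zero => omega
  | succ l ih =>
    rcases hj.eq_or_lt with rfl | hkj
    · obtain ⟨l, rfl⟩ : ∃ l', l = l' + 1 := ⟨l - 1, by omega⟩
      obtain ⟨i, hiN⟩ := i
      obtain rfl : i = j + 1 := hij
      have hbraid : SemiconjBy (t ⟨j + 1, hiN⟩ * t j) (t ⟨j + 1, hiN⟩) (t j) :=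
        (ht.braid rfl).symm.trans (mul_assoc _ _ _)
      have hcomm := ht.commute_descendingProd (l := l) (k := j + 1 + 1) (by omega)
        (Nat.lt_succ_self _)
      simpa only [descendingProd, mul_assoc] using hcomm.semiconjBy.mul_left hbraid
    · exact (ih (by omega) hkj (by omega)).mul_left
        (ht.commute_of_succ_lt (show k + 1 < (i : ℕ) by omega))

/-- The submonoid generated by those `t i` which, in the symmetric group, permute the first `k`
points only. -/
def parabolic (t : Fin N → M) (k : ℕ) : Submonoid M :=
  Submonoid.closure (t '' {i | (i : ℕ) + 1 < k})

theorem mem_parabolic {k : ℕ} {i : Fin N} (h : (i : ℕ) + 1 < k) : t i ∈ parabolic t k :=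
  Submonoid.subset_closure ⟨i, h, rfl⟩

theorem parabolic_mono (t : Fin N → M) : Monotone (parabolic t) := fun _ _ hkl =>
  Submonoid.closure_mono (Set.image_mono fun _ hi => lt_of_lt_of_le hi hkl)

theorem map_parabolic (f : M →* M') (t : Fin N → M) (k : ℕ) :
    (parabolic t k).map f = parabolic (f ∘ t) k := by
  rw [parabolic, MonoidHom.map_mclosure, parabolic, Set.image_comp]

theorem map_mem_parabolic (f : M →* M') {k : ℕ} {x : M} (hx : x ∈ parabolic t k) :
    f x ∈ parabolic (f ∘ t) k :=
  map_parabolic f t k ▸ Submonoid.mem_map_of_mem f hx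

theorem descendingProd_mem_parabolic {l k : ℕ} (h : k + l ≤ N) :
    descendingProd t l k h ∈ parabolic t (k + l + 1) := by
  induction l generalizing k with
  | zero => exact one_mem _
  | succ l ih =>
    refine mul_mem ?_ (mem_parabolic (by simp only; omega))
    simpa only [add_assoc, add_comm 1] using ih (k := k + 1) (by omega)

theorem IsCoxeterFamily.exists_mul_descendingProd (ht : IsCoxeterFamily t) {k : ℕ} (hk : k ≤ N)
    {x : M} (hx : x ∈ parabolic t (k + 1)) :
    ∃ c ∈ parabolic t k, ∃ (l a : ℕ) (h : a + l = k),
      x = c * descendingProd t l a (h.trans_le hk) := by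
  induction hx using Submonoid.closure_induction_right with
  | one => exact ⟨1, one_mem _, 0, k, rfl, (one_mul 1).symm⟩
  | mul_right x _ y hy ih =>
    obtain ⟨j, hj, rfl⟩ := hy
    obtain ⟨c, hc, l, a, rfl, rfl⟩ := ih
    replace hj : (j : ℕ) < a + l := Nat.succ_lt_succ_iff.mp hj
    rcases lt_trichotomy ((j : ℕ) + 1) a with hja | rfl | haj
    · refine ⟨c * t j, mul_mem hc (mem_parabolic (by omega)), l, a, rfl, ?_⟩
      rw [mul_assoc, (ht.commute_descendingProd hk hja).eq, mul_assoc]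
    · exact ⟨c, hc, l + 1, j, by omega, mul_assoc _ _ _⟩
    rcases (Nat.lt_succ_iff.mp haj).eq_or_lt with rfl | haj
    · obtain ⟨l, rfl⟩ : ∃ l', l = l' + 1 := ⟨l - 1, by omega⟩
      refine ⟨c, hc, l, j + 1, by omega, ?_⟩
      rw [descendingProd, mul_assoc, mul_assoc, ht.mul_self, mul_one]
    · have hi : (j : ℕ) - 1 < N := by omega
      refine ⟨c * t ⟨j - 1, hi⟩, mul_mem hc (mem_parabolic (by simp only; omega)), l, a, rfl, ?_⟩
      rw [mul_assoc, mul_assoc, (ht.semiconjBy_descendingProd hk (j := ⟨j - 1, hi⟩)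
        (by simp only; omega) (by simp only; omega) hj).eq]

end CoxeterPresentation

section SymmetricGroup

variable {n : ℕ} {M : Type*} [Monoid M]

theorem sPerm_lo (i : Fin (n - 1)) : sPerm i (lo i) = hi i := Equiv.swap_apply_left _ _

theorem sPerm_hi (i : Fin (n - 1)) : sPerm i (hi i) = lo i := Equiv.swap_apply_right _ _

theorem sPerm_apply_of_ne {i : Fin (n - 1)} {x : Fin n} (hlo : (x : ℕ) ≠ i)
    (hhi : (x : ℕ) ≠ i + 1) : sPerm i x = x :=
  Equiv.swap_apply_of_ne_of_ne (Fin.val_ne_iff.mp hlo) (Fin.val_ne_iff.mp hhi)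

theorem isCoxeterFamily_sPerm : IsCoxeterFamily (sPerm (n := n)) where
  mul_self i := Equiv.swap_mul_self _ _
  comm {i j} h := by
    have hdisj : (i : ℕ) ≠ j ∧ (i : ℕ) ≠ j + 1 ∧ (i : ℕ) + 1 ≠ j := by
      unfold Nat.dist at h
      omega
    refine Equiv.Perm.Disjoint.commute fun x => ?_
    by_cases hx : (x : ℕ) = i ∨ (x : ℕ) = i + 1
    · exact .inr (sPerm_apply_of_ne (by omega) (by omega))
    · exact .inl (sPerm_apply_of_ne (by omega) (by omega))
  braid {i j} h := by
    have hji : lo j = hi i := Fin.ext h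
    have hlo_hi : lo i ≠ hi i := Fin.ne_of_val_ne (Nat.ne_of_lt (Nat.lt_succ_self _))
    have hlo_hi' : lo i ≠ hi j := Fin.ne_of_val_ne (by simp only [lo, hi]; omega)
    have hhi_hi : hi i ≠ hi j := Fin.ne_of_val_ne (by simp only [hi]; omega)
    rw [sPerm, sPerm, hji, Equiv.swap_mul_swap_mul_swap hlo_hi hlo_hi', Equiv.swap_comm (lo i),
      Equiv.swap_comm (hi i) (hi j), Equiv.swap_mul_swap_mul_swap hhi_hi.symm hlo_hi'.symm,
      Equiv.swap_comm]

theorem descendingProd_sPerm_apply {l k : ℕ} (h : k + l ≤ n - 1) (hk : k < n) :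
    descendingProd sPerm l k h ⟨k, hk⟩ = ⟨k + l, by omega⟩ := by
  induction l generalizing k with
  | zero => rfl
  | succ l ih =>
    have hstep : sPerm ⟨k, by omega⟩ ⟨k, hk⟩ = (⟨k + 1, by omega⟩ : Fin n) :=
      sPerm_lo ⟨k, by omega⟩
    simp only [descendingProd, Equiv.Perm.mul_apply, hstep, ih]
    exact Fin.ext (by simp only; omega)

theorem apply_eq_of_mem_parabolic {k : ℕ} {p : Equiv.Perm (Fin n)} (hp : p ∈ parabolic sPerm k)
    {x : Fin n} (hx : k ≤ x) : p x = x := by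
  have hle : parabolic sPerm k ≤ (MulAction.stabilizer (Equiv.Perm (Fin n)) x).toSubmonoid := by
    rw [parabolic, Submonoid.closure_le]
    rintro _ ⟨i, hi, rfl⟩
    have hik : (i : ℕ) + 1 < k := hi
    exact sPerm_apply_of_ne (by omega) (by omega)
  exact hle hp

theorem exists_mem_parabolic_sPerm_apply_eq {a k : Fin n} (hak : a ≤ k) :
    ∃ d ∈ parabolic sPerm (k + 1), d a = k := by
  have hle : (a : ℕ) + (k - a) = k := Nat.add_sub_cancel' hak
  have hn : (a : ℕ) + (k - a) ≤ n - 1 := by omega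
  refine ⟨descendingProd sPerm (k - a) a hn, ?_, ?_⟩
  · simpa only [hle] using descendingProd_mem_parabolic (t := sPerm) hn
  · exact (descendingProd_sPerm_apply hn a.isLt).trans (Fin.ext hle)

theorem mem_parabolic_sPerm_iff {k : ℕ} {p : Equiv.Perm (Fin n)} :
    p ∈ parabolic sPerm k ↔ ∀ x : Fin n, k ≤ x → p x = x := by
  refine ⟨fun hp _ => apply_eq_of_mem_parabolic hp, fun hfix => ?_⟩
  induction k generalizing p with
  | zero =>
    obtain rfl : p = 1 := Equiv.ext fun x => hfix x (Nat.zero_le _)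
    exact one_mem _
  | succ k ih =>
    rcases lt_or_ge k n with hk | hk
    · obtain ⟨a, ha⟩ := p.surjective ⟨k, hk⟩
      have hak : a ≤ ⟨k, hk⟩ := by
        by_contra! hka
        exact hka.ne ((hfix a hka).symm.trans ha).symm
      obtain ⟨d, hd, hda⟩ := exists_mem_parabolic_sPerm_apply_eq hak
      have hfix' (x : Fin n) (hx : k ≤ x) : (p * d⁻¹) x = x := by
        rw [Equiv.Perm.mul_apply]
        rcases hx.eq_or_lt with hx | hx
        · obtain rfl : x = ⟨k, hk⟩ := Fin.ext hx.symm
          rw [Equiv.Perm.inv_eq_iff_eq.mpr hda.symm, ha]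
        · rw [Equiv.Perm.inv_eq_iff_eq.mpr (apply_eq_of_mem_parabolic hd hx).symm, hfix x hx]
      rw [← inv_mul_cancel_right p d]
      exact mul_mem (parabolic_mono _ k.le_succ (ih hfix')) hd
    · exact parabolic_mono _ k.le_succ (ih fun x hx => absurd x.isLt (by omega))

theorem mul_descendingProd_sPerm_apply {l a k : ℕ} (h : a + l = k) (hk : k < n)
    {c : Equiv.Perm (Fin n)} (hc : c ∈ parabolic sPerm k) :
    (c * descendingProd sPerm l a (by omega) : Equiv.Perm (Fin n)) ⟨a, by omega⟩ = ⟨k, hk⟩ := by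
  subst h
  rw [Equiv.Perm.mul_apply, descendingProd_sPerm_apply]
  exact apply_eq_of_mem_parabolic hc le_rfl

theorem IsCoxeterFamily.injOn_snd_parabolic {t : Fin (n - 1) → M} (ht : IsCoxeterFamily t) {k : ℕ}
    (hk : k ≤ n) :
    Set.InjOn (MonoidHom.snd M (Equiv.Perm (Fin n)))
      (parabolic (fun i => (t i, sPerm i)) k) := by
  set g : Fin (n - 1) → M × Equiv.Perm (Fin n) := fun i => (t i, sPerm i)
  induction k with
  | zero =>
    have hbot : parabolic g 0 = ⊥ := by simp [parabolic]
    rw [hbot]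
    exact Set.injOn_singleton _ _
  | succ k ih =>
    have hsnd : MonoidHom.snd M _ ∘ g = sPerm := rfl
    have hgt : IsCoxeterFamily g := ht.prodMk isCoxeterFamily_sPerm
    intro x hx y hy hxy
    obtain ⟨c, hc, l, a, hla, rfl⟩ := hgt.exists_mul_descendingProd (by omega) hx
    obtain ⟨c', hc', l', a', hla', rfl⟩ := hgt.exists_mul_descendingProd (by omega) hy
    rw [map_mul, map_mul, map_descendingProd, map_descendingProd, hsnd] at hxy
    obtain rfl : a = a' := by
      have hcs := map_mem_parabolic (MonoidHom.snd M _) hc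
      have hcs' := map_mem_parabolic (MonoidHom.snd M _) hc'
      rw [hsnd] at hcs hcs'
      have h := mul_descendingProd_sPerm_apply hla hk hcs
      have h' := mul_descendingProd_sPerm_apply hla' hk hcs'
      rw [hxy] at h
      exact Fin.mk.inj (Equiv.injective _ (h.trans h'.symm))
    obtain rfl : l = l' := by omega
    rw [ih (by omega) hc hc' (mul_right_cancel hxy)]

theorem IsCoxeterFamily.exists_monoidHom {t : Fin (n - 1) → M} (ht : IsCoxeterFamily t) :
    ∃ ρ : Equiv.Perm (Fin n) →* M, ∀ i, ρ (sPerm i) = t i := by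
  -- The pairs `(t i, sPerm i)` generate the graph of `ρ`.
  let g : Fin (n - 1) → M × Equiv.Perm (Fin n) := fun i => (t i, sPerm i)
  let toPerm : parabolic g n →* Equiv.Perm (Fin n) := (MonoidHom.snd M _).comp (Submonoid.subtype _)
  have hinj : Function.Injective toPerm := (ht.injOn_snd_parabolic le_rfl).injective
  have hsurj : Function.Surjective toPerm := fun p => by
    have hp : p ∈ (parabolic g n).map (MonoidHom.snd M _) := by
      rw [map_parabolic]
      exact mem_parabolic_sPerm_iff.mpr fun x hx => absurd x.isLt hx.not_gt
    obtain ⟨x, hx, hxp⟩ := hp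
    exact ⟨⟨x, hx⟩, hxp⟩
  let e := MulEquiv.ofBijective toPerm ⟨hinj, hsurj⟩
  refine ⟨((MonoidHom.fst M _).comp (Submonoid.subtype _)).comp e.symm.toMonoidHom, fun i => ?_⟩
  have he : e.symm (sPerm i) = ⟨g i, mem_parabolic (by omega)⟩ := e.symm_apply_eq.mpr rfl
  exact congrArg (fun x : parabolic g n => (x : M × Equiv.Perm (Fin n)).1) he

end SymmetricGroup

section Conjugation

variable {G M : Type*} [Group G] [Monoid M]

/-- The conjugation action `y ↦ ρ g * y * ρ g⁻¹` of a group on a monoid to which it maps. -/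
def conjHom (ρ : G →* M) : G →* MulAut M :=
  (MulDistribMulAction.toMulAut (ConjAct Mˣ) M).comp
    (ConjAct.toConjAct.toMonoidHom.comp ρ.toHomUnits)

theorem conjHom_apply (ρ : G →* M) (g : G) (y : M) : conjHom ρ g y = ρ g * y * ρ g⁻¹ :=
  rfl

theorem semiconjBy_conjHom (ρ : G →* M) (g : G) (y : M) :
    SemiconjBy (ρ g) y (conjHom ρ g y) := by
  rw [SemiconjBy, conjHom_apply, mul_assoc, ← map_mul, inv_mul_cancel, map_one, mul_one]

theorem conjHom_eq_of_semiconjBy {ρ : G →* M} {g : G} {y y' : M} (h : SemiconjBy (ρ g) y y') :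
    conjHom ρ g y = y' := by
  rw [conjHom_apply, h.eq, mul_assoc, ← map_mul, mul_inv_cancel, map_one, mul_one]

end Conjugation

section CrossingElements

theorem map_perm_mul {α : Type*} (p q : Equiv.Perm α) (e : Sym2 α) :
    e.map (p * q : Equiv.Perm α) = (e.map q).map p := by
  rw [Sym2.map_map, Equiv.Perm.coe_mul]

theorem map_inv_map_perm {α : Type*} (p : Equiv.Perm α) (e : Sym2 α) :
    (e.map p).map (p⁻¹ : Equiv.Perm α) = e := by
  rw [← map_perm_mul, inv_mul_cancel, Equiv.Perm.coe_one, Sym2.map_id, id]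

variable {n : ℕ} {M : Type*} [Monoid M]

/-- The pair of neighbouring positions exchanged by `sPerm i`. -/
def adjPair (i : Fin (n - 1)) : Sym2 (Fin n) := s(lo i, hi i)

/-- The relations satisfied by the elements `ζ_i τ_i` under conjugation by virtual words: `x i`
depends only on the pair of strands that it makes cross, and distant `x i` commute. -/
structure IsCrossingFamily (κ : Equiv.Perm (Fin n) →* MulAut M) (x : Fin (n - 1) → M) : Prop where
  self (i : Fin (n - 1)) : κ (sPerm i) (x i) = x i
  far {i j : Fin (n - 1)} (h : 2 ≤ Nat.dist i j) : κ (sPerm j) (x i) = x i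
  succ {i j : Fin (n - 1)} (h : (j : ℕ) = i + 1) : κ (sPerm i * sPerm j) (x i) = x j
  comm {i j : Fin (n - 1)} (h : 2 ≤ Nat.dist i j) : Commute (x i) (x j)

theorem map_adjPair_self (i : Fin (n - 1)) : (adjPair i).map (sPerm i) = adjPair i := by
  rw [adjPair, Sym2.map_mk, sPerm_lo, sPerm_hi, Sym2.eq_swap]

theorem notMem_adjPair_of_mem_adjPair {i j : Fin (n - 1)} (h : 2 ≤ Nat.dist i j) {a : Fin n}
    (ha : a ∈ adjPair i) : a ∉ adjPair j := by
  simp only [adjPair, Sym2.mem_iff, lo, hi, Fin.ext_iff, Nat.dist] at *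
  omega

theorem map_adjPair_of_two_le_dist {i j : Fin (n - 1)} (h : 2 ≤ Nat.dist i j) :
    (adjPair j).map (sPerm i) = adjPair j := by
  unfold Nat.dist at h
  rw [adjPair, Sym2.map_mk, sPerm_apply_of_ne, sPerm_apply_of_ne] <;>
    simp only [lo, hi] <;> omega

theorem map_adjPair_succ {i j : Fin (n - 1)} (h : (j : ℕ) = i + 1) :
    (adjPair i).map (sPerm i * sPerm j) = adjPair j := by
  have hji : hi i = lo j := Fin.ext h.symm
  have hlo : sPerm j (lo i) = lo i :=
    sPerm_apply_of_ne (by simp only [lo]; omega) (by simp only [lo]; omega)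
  have hhi : sPerm i (hi j) = hi j :=
    sPerm_apply_of_ne (by simp only [hi]; omega) (by simp only [hi]; omega)
  simp only [adjPair, Sym2.map_mk, Equiv.Perm.mul_apply, hlo, sPerm_lo]
  rw [hji, sPerm_lo, hhi]

variable {κ : Equiv.Perm (Fin n) →* MulAut M} {x : Fin (n - 1) → M}

theorem IsCrossingFamily.exists_map_adjPair_eq (hx : IsCrossingFamily κ x) {i l : Fin (n - 1)}
    (hil : i ≤ l) :
    ∃ q : Equiv.Perm (Fin n), (adjPair i).map q = adjPair l ∧ κ q (x i) = x l := by
  obtain ⟨d, hd⟩ : ∃ d, (i : ℕ) + d = l := Nat.exists_eq_add_of_le hil |>.imp fun _ h => h.symm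
  induction d generalizing i with
  | zero =>
    obtain rfl : i = l := Fin.ext hd
    exact ⟨1, congrFun Sym2.map_id _, by rw [map_one, MulAut.one_apply]⟩
  | succ d ih =>
    have hi : (i : ℕ) + 1 < n - 1 := by omega
    obtain ⟨q, hq, hqx⟩ := ih (i := ⟨i + 1, hi⟩) (Fin.le_def.mpr (by simp only; omega))
      (by simp only; omega)
    refine ⟨q * (sPerm i * sPerm ⟨i + 1, hi⟩), ?_, ?_⟩
    · rw [map_perm_mul, map_adjPair_succ rfl, hq]
    · rw [map_mul, MulAut.mul_apply, hx.succ rfl, hqx]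

theorem IsCrossingFamily.apply_eq_self_of_mem_parabolic (hx : IsCrossingFamily κ x)
    {l : Fin (n - 1)} {p : Equiv.Perm (Fin n)} (hp : p ∈ parabolic sPerm (l : ℕ)) :
    κ p (x l) = x l := by
  induction hp using Submonoid.closure_induction with
  | mem p hp =>
    obtain ⟨i, hi, rfl⟩ := hp
    refine hx.far ?_
    rw [Nat.dist_comm]
    exact two_le_dist_of_succ_lt hi
  | one => rw [map_one, MulAut.one_apply]
  | mul p q _ _ hp hq => rw [map_mul, MulAut.mul_apply, hq, hp]

theorem IsCrossingFamily.apply_eq_self (hx : IsCrossingFamily κ x) {l : Fin (n - 1)}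
    (hl : (l : ℕ) + 2 = n) {p : Equiv.Perm (Fin n)} (hp : (adjPair l).map p = adjPair l) :
    κ p (x l) = x l := by
  have hfix {q : Equiv.Perm (Fin n)} (hlo : q (lo l) = lo l) (hhi : q (hi l) = hi l) :
      κ q (x l) = x l := by
    refine hx.apply_eq_self_of_mem_parabolic (mem_parabolic_sPerm_iff.mpr fun y hy => ?_)
    rcases hy.eq_or_lt with hy | hy
    · rwa [show y = lo l from Fin.ext hy.symm]
    · rwa [show y = hi l from Fin.ext (by simp only [hi]; omega)]
  rcases Sym2.eq_iff.mp hp with ⟨hlo, hhi⟩ | ⟨hlo, hhi⟩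
  · exact hfix hlo hhi
  · have hs : κ (sPerm l * p) (x l) = x l :=
      hfix (by rw [Equiv.Perm.mul_apply, hlo, sPerm_hi])
        (by rw [Equiv.Perm.mul_apply, hhi, sPerm_lo])
    rw [map_mul, MulAut.mul_apply] at hs
    exact (κ (sPerm l)).injective (hs.trans (hx.self l).symm)

theorem IsCrossingFamily.apply_eq_apply (hx : IsCrossingFamily κ x) {p q : Equiv.Perm (Fin n)}
    {i j : Fin (n - 1)} (h : (adjPair i).map p = (adjPair j).map q) : κ p (x i) = κ q (x j) := by
  let l : Fin (n - 1) := ⟨n - 2, by have := i.isLt; omega⟩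
  have hle (i : Fin (n - 1)) : i ≤ l := Fin.le_def.mpr (by simp only [l]; omega)
  obtain ⟨a, ha, hax⟩ := hx.exists_map_adjPair_eq (hle i)
  obtain ⟨b, hb, hbx⟩ := hx.exists_map_adjPair_eq (hle j)
  have hai : (adjPair l).map (a⁻¹ : Equiv.Perm (Fin n)) = adjPair i := by
    rw [← ha, map_inv_map_perm]
  have hstab : (adjPair l).map (b * (q⁻¹ * (p * a⁻¹)) : Equiv.Perm (Fin n)) = adjPair l := by
    rw [map_perm_mul, map_perm_mul, map_perm_mul, hai, h, map_inv_map_perm, hb]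
  have hax' : κ a⁻¹ (x l) = x i := by rw [← hax, map_inv, MulAut.inv_apply_self]
  have hl := hx.apply_eq_self (by have := i.isLt; simp only [l]; omega) hstab
  simp only [map_mul, MulAut.mul_apply, hax'] at hl
  rw [← (κ b).injective (hl.trans hbx.symm), map_inv, MulAut.apply_inv_self]

/-- The value attached to a pair of strands: conjugate `x i` by any permutation carrying `adjPair i`
to the pair. It is the junk value `1` on the diagonal. -/
noncomputable def crossingElt (κ : Equiv.Perm (Fin n) →* MulAut M) (x : Fin (n - 1) → M) :
    Sym2 (Fin n) → M :=
  Function.extend (fun q : Equiv.Perm (Fin n) × Fin (n - 1) => (adjPair q.2).map q.1)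
    (fun q => κ q.1 (x q.2)) 1

theorem IsCrossingFamily.crossingElt_map_adjPair (hx : IsCrossingFamily κ x)
    (p : Equiv.Perm (Fin n)) (i : Fin (n - 1)) :
    crossingElt κ x ((adjPair i).map p) = κ p (x i) :=
  Function.FactorsThrough.extend_apply (fun _ _ => hx.apply_eq_apply) 1 (p, i)

theorem IsCrossingFamily.crossingElt_adjPair (hx : IsCrossingFamily κ x) (i : Fin (n - 1)) :
    crossingElt κ x (adjPair i) = x i := by
  simpa using hx.crossingElt_map_adjPair 1 i

theorem IsCrossingFamily.crossingElt_map (hx : IsCrossingFamily κ x) (p : Equiv.Perm (Fin n))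
    (e : Sym2 (Fin n)) : crossingElt κ x (e.map p) = κ p (crossingElt κ x e) := by
  by_cases he : ∃ q : Equiv.Perm (Fin n) × Fin (n - 1), (adjPair q.2).map q.1 = e
  · obtain ⟨⟨q, i⟩, rfl⟩ := he
    rw [← map_perm_mul, hx.crossingElt_map_adjPair, hx.crossingElt_map_adjPair,
      map_mul, MulAut.mul_apply]
  · have hpe : ¬ ∃ q : Equiv.Perm (Fin n) × Fin (n - 1), (adjPair q.2).map q.1 = e.map p := by
      rintro ⟨⟨q, i⟩, hq⟩
      refine he ⟨(p⁻¹ * q, i), ?_⟩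
      rw [map_perm_mul, hq, map_inv_map_perm]
    rw [crossingElt, Function.extend_apply' _ _ _ he, Function.extend_apply' _ _ _ hpe,
      Pi.one_apply, Pi.one_apply, map_one]

theorem crossingElt_mk_self (κ : Equiv.Perm (Fin n) →* MulAut M) (x : Fin (n - 1) → M)
    (a : Fin n) : crossingElt κ x s(a, a) = 1 := by
  refine Function.extend_apply' _ _ _ ?_
  rintro ⟨⟨q, i⟩, hq⟩
  have hdiag : q (lo i) = q (hi i) := by
    obtain ⟨hlo, hhi⟩ | ⟨hlo, hhi⟩ := Sym2.eq_iff.mp hq <;> exact hlo.trans hhi.symm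
  simpa [lo, hi] using q.injective hdiag

theorem exists_map_adjPair_eq_of_nodup {a b c d : Fin n} (h : [a, b, c, d].Nodup) :
    ∃ (p : Equiv.Perm (Fin n)) (i j : Fin (n - 1)), 2 ≤ Nat.dist i j ∧
      (adjPair i).map p = s(a, b) ∧ (adjPair j).map p = s(c, d) := by
  have hinj : Function.Injective ![a, b, c, d] := List.nodup_ofFn.mp (by simpa using h)
  have hn : 4 ≤ n := by simpa using Fintype.card_le_of_injective _ hinj
  obtain ⟨p, hp⟩ := Equiv.Perm.exists_extending_pair (Fin.castLE hn) ![a, b, c, d]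
    (Fin.castLE_injective hn) hinj
  exact ⟨p, ⟨0, by omega⟩, ⟨2, by omega⟩, le_rfl,
    congrArg₂ (fun y z => s(y, z)) (hp 0) (hp 1), congrArg₂ (fun y z => s(y, z)) (hp 2) (hp 3)⟩

theorem IsCrossingFamily.commute_crossingElt (hx : IsCrossingFamily κ x) {e e' : Sym2 (Fin n)}
    (h : ∀ a ∈ e, a ∉ e') : Commute (crossingElt κ x e) (crossingElt κ x e') := by
  induction e with | _ a b => ?_
  induction e' with | _ c d => ?_
  rcases eq_or_ne a b with rfl | hab
  · rw [crossingElt_mk_self]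
    exact Commute.one_left _
  rcases eq_or_ne c d with rfl | hcd
  · rw [crossingElt_mk_self]
    exact Commute.one_right _
  have hnodup : [a, b, c, d].Nodup := by simp_all
  obtain ⟨p, i, j, hij, hi, hj⟩ := exists_map_adjPair_eq_of_nodup hnodup
  rw [← hi, ← hj, hx.crossingElt_map_adjPair, hx.crossingElt_map_adjPair]
  exact (hx.comm hij).map (κ p)

end CrossingElements

section TraceEquivalence

variable {α : Type*}

/-- An isomorphism between the heaps of crossings of two lists of labels: a label-preserving
bijection `φ` between the positions carrying a crossing (`some`, as opposed to `none`) that respects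
the order of any two crossings sharing a strand. -/
structure IsHeapIso (L₁ L₂ : List (Option (Sym2 α))) (φ : ℕ → ℕ) : Prop where
  map_label {j : ℕ} {e : Sym2 α} (hj : L₁[j]? = some (some e)) : L₂[φ j]? = some (some e)
  inj {j j' : ℕ} {e e' : Sym2 α} (hj : L₁[j]? = some (some e)) (hj' : L₁[j']? = some (some e'))
    (h : φ j = φ j') : j = j'
  surj {k : ℕ} {e : Sym2 α} (hk : L₂[k]? = some (some e)) :
    ∃ j, L₁[j]? = some (some e) ∧ φ j = k
  order {j j' : ℕ} {e e' : Sym2 α} {a : α} (hj : L₁[j]? = some (some e))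
    (hj' : L₁[j']? = some (some e')) (hlt : j < j') (ha : a ∈ e) (ha' : a ∈ e') : φ j < φ j'

/-- `e` can be pulled out of `L` to the front: `L = A ++ some e :: B`, no crossing in `A` meets the
strands of `e`, and `L'` is what remains of `L`, with `none` in place of `e`. -/
def IsPullOut (e : Sym2 α) (L L' : List (Option (Sym2 α))) : Prop :=
  ∃ A B, L = A ++ some e :: B ∧ L' = A ++ none :: B ∧ ∀ e', some e' ∈ A → ∀ a ∈ e, a ∉ e'

section HeapIso

variable {e : Sym2 α} {L L' L₁ L₂ : List (Option (Sym2 α))}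

theorem exists_isHeapIso_nil_iff : (∃ φ, IsHeapIso [] L φ) ↔ ∀ e, some e ∉ L := by
  constructor
  · rintro ⟨φ, h⟩ e he
    obtain ⟨k, hk⟩ := List.mem_iff_getElem?.mp he
    obtain ⟨j, hj, -⟩ := h.surj hk
    simp at hj
  · intro h
    refine ⟨id, ⟨by simp, by simp, fun hk => ?_, by simp⟩⟩
    exact absurd (List.mem_iff_getElem?.mpr ⟨_, hk⟩) (h _)

theorem exists_isHeapIso_none_cons_iff :
    (∃ φ, IsHeapIso (none :: L₁) L₂ φ) ↔ ∃ φ, IsHeapIso L₁ L₂ φ := by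
  constructor
  · rintro ⟨φ, h⟩
    refine ⟨fun j => φ (j + 1), ⟨fun hj => h.map_label hj, fun hj hj' hφ => ?_, fun hk => ?_, ?_⟩⟩
    · exact Nat.succ_injective (h.inj (j := _ + 1) (j' := _ + 1) hj hj' hφ)
    · obtain ⟨_ | j, hj, hφ⟩ := h.surj hk
      · simp at hj
      · exact ⟨j, hj, hφ⟩
    · exact fun hj hj' hlt => h.order (j := _ + 1) (j' := _ + 1) hj hj' (Nat.succ_lt_succ hlt)
  · rintro ⟨φ, h⟩
    refine ⟨fun j => φ (j - 1), ⟨?_, ?_, fun hk => ?_, ?_⟩⟩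
    · rintro (_ | j) e hj
      · simp at hj
      · exact h.map_label hj
    · rintro (_ | j) (_ | j') e e' hj hj' hφ
      · rfl
      · simp at hj
      · simp at hj'
      · exact congrArg Nat.succ (h.inj hj hj' hφ)
    · obtain ⟨j, hj, hφ⟩ := h.surj hk
      exact ⟨j + 1, hj, hφ⟩
    · rintro (_ | j) (_ | j') e e' a hj hj' hlt
      · simp at hj
      · simp at hj
      · simp at hj'
      · exact h.order hj hj' (Nat.succ_lt_succ_iff.mp hlt)

theorem getElem?_append_none_cons {A B : List (Option (Sym2 α))} {o : Option (Sym2 α)} {k : ℕ} :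
    (A ++ none :: B)[k]? = some (some e) ↔ k ≠ A.length ∧ (A ++ o :: B)[k]? = some (some e) := by
  rcases lt_trichotomy k A.length with hk | rfl | hk
  · simp [List.getElem?_append_left hk, hk.ne]
  · simp
  · obtain ⟨d, rfl⟩ := Nat.exists_eq_add_of_lt hk
    simp [add_assoc, List.getElem?_append_right]

theorem IsHeapIso.isPullOut {φ : ℕ → ℕ} (h : IsHeapIso (some e :: L₁) L₂ φ) :
    ∃ L', IsPullOut e L₂ L' ∧ IsHeapIso L₁ L' fun j => φ (j + 1) := by
  have h₀ : (some e :: L₁)[0]? = some (some e) := rfl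
  obtain ⟨A, B, rfl, hA⟩ : ∃ A B, L₂ = A ++ some e :: B ∧ A.length = φ 0 := by
    obtain ⟨hlt, hget⟩ := List.getElem?_eq_some_iff.mp (h.map_label h₀)
    refine ⟨L₂.take (φ 0), L₂.drop (φ 0 + 1), ?_, List.length_take_of_le hlt.le⟩
    rw [← hget, List.cons_getElem_drop_succ, List.take_append_drop]
  have hne {j : ℕ} {e' : Sym2 α} (hj : L₁[j]? = some (some e')) : φ (j + 1) ≠ A.length :=
    fun hφ => absurd (h.inj (j := j + 1) hj h₀ (hφ.trans hA)) j.succ_ne_zero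
  refine ⟨_, ⟨A, B, rfl, rfl, fun e' he' a ha ha' => ?_⟩, ⟨fun hj => ?_, fun hj hj' hφ => ?_,
    fun hk => ?_, fun hj hj' hlt => ?_⟩⟩
  · obtain ⟨k, hkA, hk⟩ := List.mem_iff_getElem.mp he'
    have hk' : (A ++ some e :: B)[k]? = some (some e') := by
      rw [List.getElem?_append_left hkA, List.getElem?_eq_getElem hkA, hk]
    obtain ⟨_ | j, hj, hφ⟩ := h.surj hk'
    · omega
    · have := h.order h₀ hj j.succ_pos ha ha'
      omega
  · exact getElem?_append_none_cons.mpr ⟨hne hj, h.map_label (j := _ + 1) hj⟩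
  · exact Nat.succ_injective (h.inj (j := _ + 1) (j' := _ + 1) hj hj' hφ)
  · obtain ⟨hkA, hk'⟩ := getElem?_append_none_cons.mp hk
    obtain ⟨_ | j, hj, hφ⟩ := h.surj hk'
    · exact absurd (hφ.symm.trans hA.symm) hkA
    · exact ⟨j, hj, hφ⟩
  · exact h.order (j := _ + 1) (j' := _ + 1) hj hj' (Nat.succ_lt_succ hlt)

theorem IsPullOut.exists_isHeapIso {φ : ℕ → ℕ} (h : IsPullOut e L L') (hφ : IsHeapIso L₁ L' φ) :
    ∃ ψ, IsHeapIso (some e :: L₁) L ψ := by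
  obtain ⟨A, B, rfl, rfl, hA⟩ := h
  have hlabel {j : ℕ} {e' : Sym2 α} (hj : L₁[j]? = some (some e')) :=
    getElem?_append_none_cons (o := some e) |>.mp (hφ.map_label hj)
  refine ⟨fun j => j.casesOn A.length φ, ⟨?_, ?_, fun {k e'} hk => ?_, ?_⟩⟩
  · rintro (_ | j) e' hj
    · obtain rfl : e = e' := by simpa using hj
      simp
    · exact (hlabel hj).2
  · rintro (_ | j) (_ | j') e' e'' hj hj' h
    · rfl
    · exact absurd h.symm (hlabel hj').1
    · exact absurd h (hlabel hj).1
    · exact congrArg Nat.succ (hφ.inj hj hj' h)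
  · by_cases hkA : k = A.length
    · subst hkA
      exact ⟨0, by simpa using hk, rfl⟩
    · obtain ⟨j, hj, rfl⟩ := hφ.surj (getElem?_append_none_cons.mpr ⟨hkA, hk⟩)
      exact ⟨j + 1, hj, rfl⟩
  · rintro (_ | j) (_ | j') e' e'' a hj hj' hlt ha ha'
    · exact absurd hlt (lt_irrefl 0)
    · obtain rfl : e = e' := by simpa using hj
      obtain ⟨hne, hget⟩ := hlabel hj'
      refine lt_of_le_of_ne (not_lt.mp fun hlt' => ?_) hne.symm
      rw [List.getElem?_append_left hlt'] at hget
      exact hA e'' (List.mem_of_getElem? hget) a ha ha'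
    · exact absurd hlt (Nat.not_lt_zero _)
    · exact hφ.order hj hj' (Nat.succ_lt_succ_iff.mp hlt) ha ha'

theorem exists_isHeapIso_some_cons_iff :
    (∃ φ, IsHeapIso (some e :: L₁) L φ) ↔ ∃ L', IsPullOut e L L' ∧ ∃ φ, IsHeapIso L₁ L' φ :=
  ⟨fun ⟨_, h⟩ => h.isPullOut.imp fun _ h => h.imp_right fun h => ⟨_, h⟩,
    fun ⟨_, h, _, hφ⟩ => h.exists_isHeapIso hφ⟩

end HeapIso

/-- The renaming of strands by a permutation. -/
def relabel (p : Equiv.Perm α) (L : List (Option (Sym2 α))) : List (Option (Sym2 α)) :=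
  L.map (Option.map (Sym2.map p))

theorem relabel_one (L : List (Option (Sym2 α))) : relabel 1 L = L := by
  simp [relabel]

theorem relabel_mul (p q : Equiv.Perm α) (L : List (Option (Sym2 α))) :
    relabel (p * q) L = relabel p (relabel q L) := by
  rw [relabel, relabel, relabel, List.map_map, Option.map_comp_map, ← Sym2.map_comp,
    Equiv.Perm.coe_mul]

section TraceEquiv

variable [DecidableEq α] {e : Sym2 α} {L L' L₁ L₂ L₃ : List (Option (Sym2 α))}

/-- The sequence of crossings met by the strand `a`. -/
def crossingsAlong (a : α) (L : List (Option (Sym2 α))) : List (Option (Sym2 α)) :=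
  L.filter fun o => o.any (a ∈ ·)

/-- Equality in the trace monoid on the crossings, in which two crossings without a common strand
commute; as in any trace monoid, it can be tested on the projections to the dependent letters, here
on the strands. -/
def TraceEquiv (L₁ L₂ : List (Option (Sym2 α))) : Prop :=
  ∀ a, crossingsAlong a L₁ = crossingsAlong a L₂

theorem TraceEquiv.refl (L : List (Option (Sym2 α))) : TraceEquiv L L := fun _ => rfl

theorem TraceEquiv.symm (h : TraceEquiv L₁ L₂) : TraceEquiv L₂ L₁ := fun a => (h a).symm

theorem TraceEquiv.trans (h : TraceEquiv L₁ L₂) (h' : TraceEquiv L₂ L₃) : TraceEquiv L₁ L₃ :=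
  fun a => (h a).trans (h' a)

theorem crossingsAlong_append (a : α) (L₁ L₂ : List (Option (Sym2 α))) :
    crossingsAlong a (L₁ ++ L₂) = crossingsAlong a L₁ ++ crossingsAlong a L₂ :=
  List.filter_append ..

theorem crossingsAlong_none_cons (a : α) (L : List (Option (Sym2 α))) :
    crossingsAlong a (none :: L) = crossingsAlong a L :=
  rfl

theorem crossingsAlong_some_cons_of_mem {a : α} (ha : a ∈ e) (L : List (Option (Sym2 α))) :
    crossingsAlong a (some e :: L) = some e :: crossingsAlong a L :=
  List.filter_cons_of_pos (by simpa using ha)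

theorem crossingsAlong_some_cons_of_notMem {a : α} (ha : a ∉ e) (L : List (Option (Sym2 α))) :
    crossingsAlong a (some e :: L) = crossingsAlong a L :=
  List.filter_cons_of_neg (by simpa using ha)

theorem crossingsAlong_eq_nil_iff {a : α} :
    crossingsAlong a L = [] ↔ ∀ e, some e ∈ L → a ∉ e := by
  simp [crossingsAlong, List.filter_eq_nil_iff, Option.forall]

theorem traceEquiv_nil_iff : TraceEquiv [] L ↔ ∀ e, some e ∉ L := by
  constructor
  · intro h e he
    obtain ⟨a, ha⟩ : ∃ a, a ∈ e := ⟨_, e.out_fst_mem⟩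
    exact crossingsAlong_eq_nil_iff.mp (h a).symm e he ha
  · exact fun h a => (crossingsAlong_eq_nil_iff.mpr fun e he => absurd he (h e)).symm

theorem TraceEquiv.isPullOut (h : TraceEquiv (some e :: L₁) L) :
    ∃ L', IsPullOut e L L' ∧ TraceEquiv L₁ L' := by
  have hcons {a : α} (ha : a ∈ e) : crossingsAlong a L = some e :: crossingsAlong a L₁ :=
    (h a).symm.trans (crossingsAlong_some_cons_of_mem ha L₁)
  have hmem : some e ∈ L :=
    List.mem_of_mem_filter (hcons e.out_fst_mem ▸ List.mem_cons_self : some e ∈ crossingsAlong _ L)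
  obtain ⟨A, B, rfl, heA⟩ := List.eq_append_cons_of_mem hmem
  have hA {a : α} (ha : a ∈ e) : crossingsAlong a A = [] := by
    have hsplit := hcons ha
    rw [crossingsAlong_append] at hsplit
    cases hcA : crossingsAlong a A with
    | nil => rfl
    | cons o A' =>
      rw [hcA, List.cons_append, List.cons.injEq] at hsplit
      have heA' : some e ∈ crossingsAlong a A := by
        rw [hcA, hsplit.1]
        exact List.mem_cons_self
      exact absurd (List.mem_of_mem_filter heA') heA
  refine ⟨_, ⟨A, B, rfl, rfl, fun e' he' a ha => crossingsAlong_eq_nil_iff.mp (hA ha) e' he'⟩,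
    fun a => ?_⟩
  have ha := h a
  rw [crossingsAlong_append] at ha ⊢
  rw [crossingsAlong_none_cons]
  by_cases hae : a ∈ e
  · rw [crossingsAlong_some_cons_of_mem hae, crossingsAlong_some_cons_of_mem hae, hA hae] at ha
    rw [hA hae]
    exact List.tail_eq_of_cons_eq ha
  · rwa [crossingsAlong_some_cons_of_notMem hae, crossingsAlong_some_cons_of_notMem hae] at ha

theorem IsPullOut.traceEquiv (h : IsPullOut e L L') : TraceEquiv (some e :: L') L := by
  obtain ⟨A, B, rfl, rfl, hA⟩ := h
  intro a
  by_cases hae : a ∈ e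
  · have hnil : crossingsAlong a A = [] :=
      crossingsAlong_eq_nil_iff.mpr fun e' he' => hA e' he' a hae
    rw [crossingsAlong_some_cons_of_mem hae, crossingsAlong_append, crossingsAlong_append, hnil,
      crossingsAlong_some_cons_of_mem hae]
    rfl
  · rw [crossingsAlong_some_cons_of_notMem hae, crossingsAlong_append, crossingsAlong_append,
      crossingsAlong_some_cons_of_notMem hae, crossingsAlong_none_cons]

theorem TraceEquiv.cons (o : Option (Sym2 α)) (h : TraceEquiv L₁ L₂) :
    TraceEquiv (o :: L₁) (o :: L₂) := fun a => by
  simp only [crossingsAlong, List.filter_cons] at h ⊢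
  rw [show L₁.filter _ = L₂.filter _ from h a]

theorem exists_isHeapIso_iff_traceEquiv : (∃ φ, IsHeapIso L₁ L₂ φ) ↔ TraceEquiv L₁ L₂ := by
  induction L₁ generalizing L₂ with
  | nil => rw [exists_isHeapIso_nil_iff, traceEquiv_nil_iff]
  | cons o L₁ ih =>
    cases o with
    | none => exact exists_isHeapIso_none_cons_iff.trans ih
    | some e =>
      simp only [exists_isHeapIso_some_cons_iff, ih]
      exact ⟨fun ⟨_, hpull, h⟩ => (h.cons _).trans hpull.traceEquiv, TraceEquiv.isPullOut⟩

theorem TraceEquiv.append {L₁' L₂' : List (Option (Sym2 α))} (h : TraceEquiv L₁ L₂)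
    (h' : TraceEquiv L₁' L₂') : TraceEquiv (L₁ ++ L₁') (L₂ ++ L₂') := fun a => by
  rw [crossingsAlong_append, crossingsAlong_append, h a, h' a]

theorem traceEquiv_swap {e' : Sym2 α} (h : ∀ a ∈ e, a ∉ e') :
    TraceEquiv [some e, some e'] [some e', some e] := fun a => by
  by_cases hae : a ∈ e
  · simp [crossingsAlong, hae, h a hae]
  · simp [crossingsAlong, hae, List.filter_cons]

theorem crossingsAlong_relabel (p : Equiv.Perm α) (a : α) (L : List (Option (Sym2 α))) :
    crossingsAlong (p a) (relabel p L) = relabel p (crossingsAlong a L) := by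
  rw [crossingsAlong, relabel, List.filter_map]
  congr 2
  funext o
  cases o <;> simp

theorem TraceEquiv.relabel (p : Equiv.Perm α) (h : TraceEquiv L₁ L₂) :
    TraceEquiv (relabel p L₁) (relabel p L₂) := fun a => by
  obtain ⟨a, rfl⟩ := p.surjective a
  rw [crossingsAlong_relabel, crossingsAlong_relabel, h a]

end TraceEquiv

section LabelProd

variable {M : Type*} [Monoid M] {f : Sym2 α → M}

/-- The product of the values of the crossings in `L`. -/
def labelProd (f : Sym2 α → M) (L : List (Option (Sym2 α))) : M :=
  (L.map fun o => o.elim 1 f).prod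

theorem labelProd_cons (f : Sym2 α → M) (o : Option (Sym2 α)) (L : List (Option (Sym2 α))) :
    labelProd f (o :: L) = o.elim 1 f * labelProd f L :=
  List.prod_cons

theorem labelProd_append (f : Sym2 α → M) (L₁ L₂ : List (Option (Sym2 α))) :
    labelProd f (L₁ ++ L₂) = labelProd f L₁ * labelProd f L₂ := by
  rw [labelProd, List.map_append, List.prod_append, labelProd, labelProd]

theorem semiconjBy_labelProd {p : Equiv.Perm α} {m : M}
    (h : ∀ e, SemiconjBy m (f e) (f (e.map p))) (L : List (Option (Sym2 α))) :
    SemiconjBy m (labelProd f L) (labelProd f (relabel p L)) := by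
  induction L with
  | nil => exact SemiconjBy.one_right m
  | cons o L ih =>
    rw [relabel, List.map_cons, labelProd_cons, labelProd_cons]
    refine SemiconjBy.mul_right ?_ ih
    cases o with
    | none => exact SemiconjBy.one_right m
    | some e => exact h e

theorem IsPullOut.labelProd_eq {e : Sym2 α} {L L' : List (Option (Sym2 α))}
    (hf : ∀ e e', (∀ a ∈ e, a ∉ e') → Commute (f e) (f e')) (h : IsPullOut e L L') :
    labelProd f L = f e * labelProd f L' := by
  obtain ⟨A, B, rfl, rfl, hA⟩ := h
  have hcomm : Commute (f e) (labelProd f A) := by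
    refine Commute.list_prod_right _ _ fun _ hm => ?_
    obtain ⟨_ | e', he', rfl⟩ := List.mem_map.mp hm
    · exact Commute.one_right _
    · exact hf e e' (hA e' he')
  simp only [labelProd_append, labelProd_cons, Option.elim, one_mul]
  rw [← mul_assoc, ← mul_assoc, hcomm.eq]

theorem TraceEquiv.labelProd_eq [DecidableEq α] {L₁ L₂ : List (Option (Sym2 α))}
    (hf : ∀ e e', (∀ a ∈ e, a ∉ e') → Commute (f e) (f e')) (h : TraceEquiv L₁ L₂) :
    labelProd f L₁ = labelProd f L₂ := by
  induction L₁ generalizing L₂ with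
  | nil =>
    refine (List.prod_eq_one ?_).symm
    rintro _ hm
    obtain ⟨_ | e, he, rfl⟩ := List.mem_map.mp hm
    · rfl
    · exact absurd he (traceEquiv_nil_iff.mp h e)
  | cons o L₁ ih =>
    rw [labelProd_cons]
    cases o with
    | none => exact (one_mul _).trans (ih h)
    | some e =>
      obtain ⟨L₂', hpull, h'⟩ := h.isPullOut
      rw [ih h', hpull.labelProd_eq hf]
      rfl

end LabelProd

end TraceEquivalence

section BraidWords

variable {n : ℕ} {M : Type*} [Monoid M] {w w1 w2 : List (Letter n)}

theorem prefPerm_cons_succ (g : Letter n) (w : List (Letter n)) (j : ℕ) :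
    prefPerm (g :: w) (j + 1) = prefPerm w j * transOf g := by
  simp [prefPerm]

theorem permOf_inv (w : List (Letter n)) : (permOf w)⁻¹ = (w.map transOf).prod := by
  have hinv (g : Letter n) : (transOf g)⁻¹ = transOf g := Equiv.swap_inv _ _
  simp [permOf, List.prod_inv_reverse, Function.comp_def, hinv]

theorem permOf_inv_cons (g : Letter n) (w : List (Letter n)) :
    (permOf (g :: w))⁻¹ = transOf g * (permOf w)⁻¹ := by
  rw [permOf_inv, permOf_inv, List.map_cons, List.prod_cons]

theorem strandsAt_cons_succ (g : Letter n) (w : List (Letter n)) (j : ℕ) :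
    strandsAt (g :: w) (j + 1) = (strandsAt w j).map (Sym2.map (transOf g)) := by
  have hinv : (transOf g)⁻¹ = transOf g := Equiv.swap_inv _ _
  rw [strandsAt, strandsAt, prefPerm_cons_succ, mul_inv_rev, hinv, Option.map_map]
  rfl

/-- The crossing at the top of a word starting with the given letter; `none` if it is virtual. -/
def Letter.label : Letter n → Option (Sym2 (Fin n))
  | zeta i => some (adjPair i)
  | tau _ => none

/-- The vertices of `Γ(w)` from top to bottom, each recorded as the pair of top labels of the
strands that cross there, with `none` in place of the virtual crossings. -/
def labels : List (Letter n) → List (Option (Sym2 (Fin n)))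
  | [] => []
  | g :: w => g.label :: relabel (transOf g) (labels w)

theorem labels_append (w w' : List (Letter n)) :
    labels (w ++ w') = labels w ++ relabel (permOf w)⁻¹ (labels w') := by
  induction w with
  | nil => exact (relabel_one _).symm
  | cons g w ih =>
    rw [List.cons_append, labels, ih, permOf_inv_cons, relabel_mul, labels, List.cons_append,
      relabel, List.map_append]
    rfl

section GammaIso

theorem labels_getElem?_eq_some_iff {j : ℕ} {e : Sym2 (Fin n)} :
    (labels w)[j]? = some (some e) ↔ j ∈ ZetaPos w ∧ strandsAt w j = some e := by
  induction w generalizing j e with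
  | nil => simp [labels, strandsAt]
  | cons g w ih =>
    cases j with
    | zero =>
      cases g <;> simp [labels, Letter.label, adjPair, ZetaPos, strandsAt, prefPerm, Letter.idx]
    | succ j =>
      have hpos : j + 1 ∈ ZetaPos (g :: w) ↔ j ∈ ZetaPos w := Iff.rfl
      simp only [labels, relabel, strandsAt_cons_succ, hpos, List.getElem?_cons_succ,
        List.getElem?_map, Option.map_eq_some_iff]
      constructor
      · rintro ⟨_, hj, e, rfl, rfl⟩
        exact ⟨(ih.mp hj).1, e, (ih.mp hj).2, rfl⟩
      · rintro ⟨hj, e, he, rfl⟩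
        exact ⟨_, ih.mpr ⟨hj, he⟩, e, rfl, rfl⟩

theorem exists_labels_getElem?_eq_some {j : ℕ} (hj : j ∈ ZetaPos w) :
    ∃ e, (labels w)[j]? = some (some e) := by
  obtain ⟨i, hi⟩ := hj
  exact ⟨_, labels_getElem?_eq_some_iff.mpr ⟨⟨i, hi⟩, by rw [strandsAt, hi]; rfl⟩⟩

theorem IsGammaIso.isHeapIso {φ : ℕ → ℕ} (h : IsGammaIso w1 w2 φ) :
    IsHeapIso (labels w1) (labels w2) φ where
  map_label hj := by
    obtain ⟨hj, he⟩ := labels_getElem?_eq_some_iff.mp hj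
    exact labels_getElem?_eq_some_iff.mpr ⟨h.maps _ hj, (h.strands _ hj).trans he⟩
  inj hj hj' hφ :=
    h.inj _ (labels_getElem?_eq_some_iff.mp hj).1 _ (labels_getElem?_eq_some_iff.mp hj').1 hφ
  surj hk := by
    obtain ⟨hk, he⟩ := labels_getElem?_eq_some_iff.mp hk
    obtain ⟨j, hj, rfl⟩ := h.surj _ hk
    exact ⟨j, labels_getElem?_eq_some_iff.mpr ⟨hj, (h.strands j hj).symm.trans he⟩, rfl⟩
  order hj hj' hlt ha ha' := by
    obtain ⟨hj, he⟩ := labels_getElem?_eq_some_iff.mp hj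
    obtain ⟨hj', he'⟩ := labels_getElem?_eq_some_iff.mp hj'
    exact h.order _ hj _ hj' hlt ⟨_, _, _, he, he', ha, ha'⟩

theorem IsHeapIso.isGammaIso {φ : ℕ → ℕ} (h : IsHeapIso (labels w1) (labels w2) φ)
    (hperm : permOf w1 = permOf w2) : IsGammaIso w1 w2 φ where
  maps j hj := by
    obtain ⟨e, he⟩ := exists_labels_getElem?_eq_some hj
    exact (labels_getElem?_eq_some_iff.mp (h.map_label he)).1
  inj j hj j' hj' hφ := by
    obtain ⟨e, he⟩ := exists_labels_getElem?_eq_some hj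
    obtain ⟨e', he'⟩ := exists_labels_getElem?_eq_some hj'
    exact h.inj he he' hφ
  surj k hk := by
    obtain ⟨e, he⟩ := exists_labels_getElem?_eq_some hk
    obtain ⟨j, hj, hφ⟩ := h.surj he
    exact ⟨j, (labels_getElem?_eq_some_iff.mp hj).1, hφ⟩
  strands j hj := by
    obtain ⟨e, he⟩ := exists_labels_getElem?_eq_some hj
    rw [(labels_getElem?_eq_some_iff.mp (h.map_label he)).2, (labels_getElem?_eq_some_iff.mp he).2]
  order := by
    rintro j hj j' hj' hlt ⟨e, e', a, he, he', ha, ha'⟩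
    exact h.order (labels_getElem?_eq_some_iff.mpr ⟨hj, he⟩)
      (labels_getElem?_eq_some_iff.mpr ⟨hj', he'⟩) hlt ha ha'
  perm := hperm

theorem isGammaIso_iff {φ : ℕ → ℕ} :
    IsGammaIso w1 w2 φ ↔ IsHeapIso (labels w1) (labels w2) φ ∧ permOf w1 = permOf w2 :=
  ⟨fun h => ⟨h.isHeapIso, h.perm⟩, fun ⟨h, hperm⟩ => h.isGammaIso hperm⟩

end GammaIso

section Valuation

/-- The valuation `v` of the letters is compatible with the strong moves, so that it extends to
braid words up to strong equivalence. -/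
def RespectsStrong (v : Letter n → M) : Prop :=
  ∀ ⦃r1 r2⦄, RelStrong n r1 r2 → (r1.map v).prod = (r2.map v).prod

variable {v : Letter n → M}

theorem StrongEq.map_prod_eq (hv : RespectsStrong v) (h : StrongEq w1 w2) :
    (w1.map v).prod = (w2.map v).prod := by
  induction h with
  | rel _ _ h =>
    obtain ⟨A, B, r1, r2, h, rfl, rfl⟩ := h
    simp only [List.map_append, List.prod_append, hv h]
  | refl _ => rfl
  | symm _ _ _ ih => exact ih.symm
  | trans _ _ _ _ _ ih ih' => exact ih.trans ih'

theorem respectsStrong_transOf : RespectsStrong (transOf (n := n)) := by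
  have hs := isCoxeterFamily_sPerm (n := n)
  intro r1 r2 h
  cases h with
  | tt i => simpa [transOf, Letter.idx] using hs.mul_self i
  | virt i => rfl
  | far_zz i j h => simpa [transOf, Letter.idx] using (hs.comm h).eq
  | far_zt i j h => simpa [transOf, Letter.idx] using (hs.comm h).eq
  | far_tt i j h => simpa [transOf, Letter.idx] using (hs.comm h).eq
  | r3v i j h => simpa [transOf, Letter.idx, mul_assoc] using hs.braid h
  | semi i j h => simpa [transOf, Letter.idx, mul_assoc] using hs.braid h

theorem StrongEq.permOf_eq (h : StrongEq w1 w2) : permOf w1 = permOf w2 := by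
  rw [← inv_inj, permOf_inv, permOf_inv, h.map_prod_eq respectsStrong_transOf]

theorem RespectsStrong.isCoxeterFamily (hv : RespectsStrong v) :
    IsCoxeterFamily fun i => v (.tau i) where
  mul_self i := by simpa using hv (.tt i)
  comm {i j} h := by simpa [Commute, SemiconjBy] using hv (.far_tt i j h)
  braid {i j} h := by simpa [mul_assoc] using hv (.r3v i j h)

theorem RespectsStrong.isCrossingFamily (hv : RespectsStrong v) {ρ : Equiv.Perm (Fin n) →* M}
    (hρ : ∀ i, ρ (sPerm i) = v (.tau i)) :
    IsCrossingFamily (conjHom ρ) fun i => v (.zeta i) * v (.tau i) := by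
  have htt {i j : Fin (n - 1)} (h : 2 ≤ Nat.dist i j) : Commute (v (.tau i)) (v (.tau j)) :=
    hv.isCoxeterFamily.comm h
  have hzt {i j : Fin (n - 1)} (h : 2 ≤ Nat.dist i j) : Commute (v (.zeta i)) (v (.tau j)) := by
    simpa [Commute, SemiconjBy] using hv (.far_zt i j h)
  have hzz {i j : Fin (n - 1)} (h : 2 ≤ Nat.dist i j) : Commute (v (.zeta i)) (v (.zeta j)) := by
    simpa [Commute, SemiconjBy] using hv (.far_zz i j h)
  have hvirt (i : Fin (n - 1)) : Commute (v (.zeta i)) (v (.tau i)) := by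
    simpa [Commute, SemiconjBy] using hv (.virt i)
  refine ⟨fun i => ?_, fun {i j} h => ?_, fun {i j} h => ?_, fun {i j} h => ?_⟩
  · refine conjHom_eq_of_semiconjBy ?_
    rw [hρ]
    exact (hvirt i).symm.mul_right (Commute.refl _)
  · refine conjHom_eq_of_semiconjBy ?_
    rw [hρ]
    exact (hzt h).symm.mul_right (htt h).symm
  · have hsemi : SemiconjBy (v (.tau i) * v (.tau j)) (v (.zeta i)) (v (.zeta j)) := by
      simpa [SemiconjBy, mul_assoc] using hv (.semi i j h)
    have hbraid : SemiconjBy (v (.tau i) * v (.tau j)) (v (.tau i)) (v (.tau j)) := by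
      simpa [SemiconjBy, mul_assoc] using hv (.r3v i j h)
    refine conjHom_eq_of_semiconjBy ?_
    rw [map_mul, hρ, hρ]
    exact hsemi.mul_right hbraid
  · have h' : 2 ≤ Nat.dist j i := Nat.dist_comm i j ▸ h
    exact ((hzz h).mul_right (hzt h)).mul_left ((hzt h').symm.mul_right (htt h))

theorem RespectsStrong.map_prod_eq_labelProd (hv : RespectsStrong v)
    {ρ : Equiv.Perm (Fin n) →* M} (hρ : ∀ i, ρ (sPerm i) = v (.tau i)) (w : List (Letter n)) :
    (w.map v).prod =
      labelProd (crossingElt (conjHom ρ) fun i => v (.zeta i) * v (.tau i)) (labels w) *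
        ρ (permOf w)⁻¹ := by
  set c := crossingElt (conjHom ρ) fun i => v (.zeta i) * v (.tau i)
  have hx := hv.isCrossingFamily hρ
  have hletter (g : Letter n) : v g = g.label.elim 1 c * ρ (transOf g) := by
    cases g with
    | zeta i =>
      have hc : c (adjPair i) = v (.zeta i) * v (.tau i) := hx.crossingElt_adjPair i
      change v (.zeta i) = c (adjPair i) * ρ (sPerm i)
      rw [hc, hρ, mul_assoc, hv.isCoxeterFamily.mul_self, mul_one]
    | tau i => exact ((one_mul _).trans (hρ i)).symm
  have hconj (p : Equiv.Perm (Fin n)) (e : Sym2 (Fin n)) :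
      SemiconjBy (ρ p) (c e) (c (e.map p)) := by
    rw [show c (e.map p) = conjHom ρ p (c e) from hx.crossingElt_map p e]
    exact semiconjBy_conjHom ρ p (c e)
  induction w with
  | nil => simp [labels, labelProd, permOf]
  | cons g w ih =>
    rw [List.map_cons, List.prod_cons, ih, labels, labelProd_cons, permOf_inv_cons, map_mul,
      hletter, mul_assoc, mul_assoc, ← mul_assoc (ρ _), (semiconjBy_labelProd (hconj _) _).eq,
      mul_assoc]

theorem RespectsStrong.map_prod_eq_of_traceEquiv (hv : RespectsStrong v)
    (h : TraceEquiv (labels w1) (labels w2)) (hperm : permOf w1 = permOf w2) :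
    (w1.map v).prod = (w2.map v).prod := by
  obtain ⟨ρ, hρ⟩ := hv.isCoxeterFamily.exists_monoidHom
  have hcomm (e e' : Sym2 (Fin n)) (he : ∀ a ∈ e, a ∉ e') :=
    (hv.isCrossingFamily hρ).commute_crossingElt he
  rw [hv.map_prod_eq_labelProd hρ, hv.map_prod_eq_labelProd hρ, h.labelProd_eq hcomm, hperm]

end Valuation

section StrongEquivalence

theorem RelStrong.strongEq {r1 r2 : List (Letter n)} (h : RelStrong n r1 r2) : StrongEq r1 r2 :=
  .rel _ _ ⟨[], [], r1, r2, h, by simp, by simp⟩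

theorem RelStrong.traceEquiv_labels {r1 r2 : List (Letter n)} (h : RelStrong n r1 r2) :
    TraceEquiv (labels r1) (labels r2) := by
  cases h with
  | tt i => exact fun _ => rfl
  | virt i =>
    simp only [labels, relabel, Letter.label, List.map, Option.map, transOf, Letter.idx,
      map_adjPair_self]
    exact fun a => by simp [crossingsAlong, List.filter_cons]
  | far_zz i j h =>
    have h' : 2 ≤ Nat.dist j i := Nat.dist_comm i j ▸ h
    simp only [labels, relabel, Letter.label, List.map, Option.map, transOf, Letter.idx,
      map_adjPair_of_two_le_dist h, map_adjPair_of_two_le_dist h']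
    exact traceEquiv_swap fun a => notMem_adjPair_of_mem_adjPair h
  | far_zt i j h =>
    have h' : 2 ≤ Nat.dist j i := Nat.dist_comm i j ▸ h
    simp only [labels, relabel, Letter.label, List.map, Option.map, transOf, Letter.idx,
      map_adjPair_of_two_le_dist h']
    exact fun a => by simp [crossingsAlong, List.filter_cons]
  | far_tt i j h => exact fun _ => rfl
  | r3v i j h => exact fun _ => rfl
  | semi i j h =>
    simp only [labels, relabel, Letter.label, List.map, Option.map, transOf, Letter.idx,
      ← map_perm_mul, map_adjPair_succ h]
    exact fun a => by simp [crossingsAlong, List.filter_cons]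

theorem StrongEq.traceEquiv_labels (h : StrongEq w1 w2) :
    TraceEquiv (labels w1) (labels w2) := by
  induction h with
  | rel _ _ h =>
    obtain ⟨A, B, r1, r2, h, rfl, rfl⟩ := h
    rw [List.append_assoc, List.append_assoc, labels_append, labels_append, labels_append,
      labels_append, h.strongEq.permOf_eq]
    exact .append (.refl _) ((h.traceEquiv_labels.append (.refl _)).relabel _)
  | refl _ => exact .refl _
  | symm _ _ _ ih => exact ih.symm
  | trans _ _ _ _ _ ih ih' => exact ih.trans ih'

theorem StepOf.append {R : List (Letter n) → List (Letter n) → Prop} (h : StepOf R w1 w2)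
    (C D : List (Letter n)) : StepOf R (C ++ w1 ++ D) (C ++ w2 ++ D) := by
  obtain ⟨A, B, r1, r2, h, rfl, rfl⟩ := h
  exact ⟨C ++ A, B ++ D, r1, r2, h, by simp, by simp⟩

theorem StrongEq.append_append (h : StrongEq w1 w2) (C D : List (Letter n)) :
    StrongEq (C ++ w1 ++ D) (C ++ w2 ++ D) := by
  induction h with
  | rel _ _ h => exact .rel _ _ (h.append C D)
  | refl _ => exact .refl _
  | symm _ _ _ ih => exact .symm _ _ ih
  | trans _ _ _ _ _ ih ih' => exact .trans _ _ _ ih ih'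

theorem StrongEq.append {w1' w2' : List (Letter n)} (h : StrongEq w1 w2)
    (h' : StrongEq w1' w2') : StrongEq (w1 ++ w1') (w2 ++ w2') :=
  have hleft : StrongEq (w1 ++ w1') (w2 ++ w1') := by simpa using h.append_append [] w1'
  have hright : StrongEq (w2 ++ w1') (w2 ++ w2') := by simpa using h'.append_append w2 []
  .trans _ _ _ hleft hright

/-- Strong equivalence as a congruence; its quotient is the monoid of braid words modulo the strong
moves, where `ζ_i` need not be invertible. -/
def strongCon (n : ℕ) : Con (FreeMonoid (Letter n)) where
  r w1 w2 := StrongEq w1.toList w2.toList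
  iseqv := ⟨fun _ => .refl _, fun h => .symm _ _ h, fun h h' => .trans _ _ _ h h'⟩
  mul' h h' := h.append h'

/-- The universal valuation of the letters that respects the strong moves. -/
def strongClass (g : Letter n) : (strongCon n).Quotient := FreeMonoid.of g

theorem map_strongClass_prod (w : List (Letter n)) :
    (w.map strongClass).prod = (FreeMonoid.ofList w : (strongCon n).Quotient) := by
  induction w with
  | nil => rfl
  | cons g w ih =>
    rw [List.map_cons, List.prod_cons, ih]
    rfl

theorem map_strongClass_prod_eq_iff :
    (w1.map strongClass).prod = (w2.map strongClass).prod ↔ StrongEq w1 w2 := by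
  rw [map_strongClass_prod, map_strongClass_prod]
  exact (strongCon n).eq

theorem respectsStrong_strongClass : RespectsStrong (strongClass (n := n)) :=
  fun _ _ h => map_strongClass_prod_eq_iff.mpr h.strongEq

theorem strongEq_iff_traceEquiv :
    StrongEq w1 w2 ↔ TraceEquiv (labels w1) (labels w2) ∧ permOf w1 = permOf w2 :=
  ⟨fun h => ⟨h.traceEquiv_labels, h.permOf_eq⟩, fun ⟨h, hperm⟩ => map_strongClass_prod_eq_iff.mp
    (respectsStrong_strongClass.map_prod_eq_of_traceEquiv h hperm)⟩

end StrongEquivalence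

end BraidWords

/-- two braid words are strongly equivalent iff their decorated graphs
`Γ` are isomorphic preserving all structure (endpoint ordering / permutation,
orientation, strand pairs through crossings, and order of crossings along strands). -/
theorem strongEq_iff_gammaIso (n : ℕ) (w1 w2 : List (Letter n)) :
    StrongEq w1 w2 ↔ ∃ φ : ℕ → ℕ, IsGammaIso w1 w2 φ := by
  simp only [strongEq_iff_traceEquiv, isGammaIso_iff, exists_and_right,
    exists_isHeapIso_iff_traceEquiv]

end OneTermBracket
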